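/- (Bounded harmonic functions on a Euclidean end tend to a constant.) Let n ≥ 3, R > 0, and let h : ℝⁿ → ℝ be a bounded function which is harmonic (Δh = 0, with h twice continuously differentiable) on the exterior region {x ∈ ℝⁿ : ‖x‖ > R}. Then there exists a constant A ∈ ℝ such that h(x) → A as ‖x‖ → ∞. -/

import Mathlib

/-!
The proof uses only the weak maximum principle, explicit barriers and reflections.

**Oscillation on spheres.** Let `|h| ≤ M`. Given `|x| = |y|`, let `σ` be the linear reflection
exchanging `x` and `y`, with unit normal `e` pointing to the side of `x`. Then `g = h - h ∘ σ` is
harmonic outside the ball, is bounded by `2M`, and vanishes on the mirror `⟨z, e⟩ = 0`. On the half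
shell `R₀ ≤ |z| ≤ ρ`, `⟨z, e⟩ ≥ 0` it lies below
`2M R₀ / |z| + 2M (|z|²/ρ² + (n + 1) (⟨z, e⟩/ρ) (1 - ⟨z, e⟩/ρ))`:
the first term is at least `2M` on the inner sphere and superharmonic because `n ≥ 3`, the second
is nonnegative, at least `2M` on the outer sphere, and has Laplacian `-4M/ρ² < 0`. Letting `ρ → ∞`
gives `|h x - h y| ≤ 2M R₀ / |x|` (`sphere_osc`).

**Convergence.** Let `A` be the lower limit of `h` at infinity. There are arbitrarily large spheres
carrying a value close to `A`, hence, by the oscillation bound, lying entirely below `A + ε/2`. The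
maximum principle on the shell between two of them (`shell_max`) gives `h ≤ A + ε/2` in between,
so the upper limit is at most `A` as well.
-/

noncomputable section

open MeasureTheory Filter
open scoped ENNReal Topology

/-- `n`-dimensional Euclidean space. -/
abbrev Euc (n : ℕ) := EuclideanSpace ℝ (Fin n)

/-- The Japanese bracket `⟨x⟩ = (1 + ‖x‖²)^(1/2)`. -/
def jap {n : ℕ} (x : Euc n) : ℝ := Real.sqrt (1 + ‖x‖ ^ 2)

/-- Partial derivative `∂ᵢ f` of a real-valued function. -/
def pd {n : ℕ} (i : Fin n) (f : Euc n → ℝ) (x : Euc n) : ℝ :=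
  fderiv ℝ f x (EuclideanSpace.single i 1)

/-- The Euclidean Laplacian `Δf = Σᵢ ∂ᵢ²f`. -/
def lap {n : ℕ} (f : Euc n → ℝ) (x : Euc n) : ℝ :=
  ∑ i, pd i (pd i f) x

/-- Divergence of a vector field. -/
def divg {n : ℕ} (W : Euc n → Euc n) (x : Euc n) : ℝ :=
  ∑ i, pd i (fun y => W y i) x

/-- The conformal Killing operator `(𝒟W)ᵢⱼ = ∂ᵢWⱼ + ∂ⱼWᵢ − (2/n)(div W)δᵢⱼ`. -/
def confKill {n : ℕ} (W : Euc n → Euc n) (x : Euc n) : Matrix (Fin n) (Fin n) ℝ :=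
  Matrix.of fun i j =>
    pd i (fun y => W y j) x + pd j (fun y => W y i) x
      - (2 / (n : ℝ)) * divg W x * (if i = j then 1 else 0)

/-- The Frobenius norm of a matrix. -/
def frob {n : ℕ} (M : Matrix (Fin n) (Fin n) ℝ) : ℝ :=
  Real.sqrt (∑ i, ∑ j, (M i j) ^ 2)

/-- The vector Laplacian `(Δ_L W)ⱼ = −Σᵢ ∂ᵢ (𝒟W)ᵢⱼ`. -/
def vecLap {n : ℕ} (W : Euc n → Euc n) (x : Euc n) : Euc n :=
  (EuclideanSpace.equiv (Fin n) ℝ).symm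
    (fun j => -∑ i, pd i (fun y => confKill W y i j) x)

/-- Weighted `L^p_δ` norm (as an extended nonnegative real). -/
def LpW {n : ℕ} {F : Type*} [NormedAddCommGroup F] (p δ : ℝ) (f : Euc n → F) : ℝ≥0∞ :=
  (∫⁻ x, ENNReal.ofReal ((jap x ^ (-δ - (n : ℝ) / p) * ‖f x‖) ^ p)) ^ (1 / p)

/-- Weighted Sobolev `W^{k,p}_δ` norm. -/
def SobW {n : ℕ} {F : Type*} [NormedAddCommGroup F] [NormedSpace ℝ F]
    (k : ℕ) (p δ : ℝ) (f : Euc n → F) : ℝ≥0∞ :=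
  ∑ j ∈ Finset.range (k + 1),
    (∫⁻ x, ENNReal.ofReal
      ((jap x ^ (-δ - (n : ℝ) / p + (j : ℝ)) * ‖iteratedFDeriv ℝ j f x‖) ^ p)) ^ (1 / p)

/-- Weighted `L^∞_δ` norm. -/
def LinfW {n : ℕ} {F : Type*} [NormedAddCommGroup F] (δ : ℝ) (f : Euc n → F) : ℝ≥0∞ :=
  ⨆ x, ENNReal.ofReal (jap x ^ (-δ) * ‖f x‖)

/-- Weighted `L^∞_δ` norm of a matrix field, pointwise Frobenius norm. -/
def LinfWM {n : ℕ} (δ : ℝ) (σ : Euc n → Matrix (Fin n) (Fin n) ℝ) : ℝ≥0∞ :=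
  ⨆ x, ENNReal.ofReal (jap x ^ (-δ) * frob (σ x))

/-- `N = 2n/(n−2)`. -/
def Nc (n : ℕ) : ℝ := 2 * n / ((n : ℝ) - 2)
/-- `c_n = (n−2)/(4(n−1))`. -/
def cc (n : ℕ) : ℝ := ((n : ℝ) - 2) / (4 * ((n : ℝ) - 1))
/-- `b_n = (n−2)/(4n)`. -/
def bc (n : ℕ) : ℝ := ((n : ℝ) - 2) / (4 * (n : ℝ))

/-- Componentwise smoothness of a matrix field. -/
def SmoothMat {n : ℕ} (σ : Euc n → Matrix (Fin n) (Fin n) ℝ) : Prop :=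
  ∀ i j, ContDiff ℝ (⊤ : ℕ∞) fun x => σ x i j

/-- A matrix field is symmetric, trace-free and divergence-free. -/
def SymTT {n : ℕ} (σ : Euc n → Matrix (Fin n) (Fin n) ℝ) : Prop :=
  (∀ x i j, σ x i j = σ x j i) ∧ (∀ x, ∑ i, σ x i i = 0) ∧
    (∀ x j, ∑ i, pd i (fun y => σ y i j) x = 0)

/-- The left-hand side of the Lichnerowicz (Hamiltonian) equation (i). -/
def HamExpr {n : ℕ} (τ : Euc n → ℝ) (σ : Euc n → Matrix (Fin n) (Fin n) ℝ)
    (ρ : Euc n → ℝ) (u : Euc n → ℝ) (W : Euc n → Euc n) (x : Euc n) : ℝ :=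
  lap u x + cc n * frob (σ x + confKill W x) ^ 2 * u x ^ (-(Nc n) - 1)
    - bc n * τ x ^ 2 * u x ^ (Nc n - 1) + cc n * ρ x * u x ^ (-(Nc n) / 2)

/-- Equation (i): the Lichnerowicz equation. -/
def HamEq {n : ℕ} (τ : Euc n → ℝ) (σ : Euc n → Matrix (Fin n) (Fin n) ℝ)
    (ρ : Euc n → ℝ) (u : Euc n → ℝ) (W : Euc n → Euc n) : Prop :=
  ∀ x, HamExpr τ σ ρ u W x = 0

/-- Equation (ii): the momentum constraint `Δ_L W + ((n−1)/n) u^N ∇τ + J = 0`. -/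
def MomEq {n : ℕ} (τ : Euc n → ℝ) (J : Euc n → Euc n)
    (u : Euc n → ℝ) (W : Euc n → Euc n) : Prop :=
  ∀ x, vecLap W x + ((((n : ℝ) - 1) / n) * u x ^ Nc n) • gradient τ x + J x = 0

/-- Global supersolution property for `φ₊`. -/
def GlobalSuperSol {n : ℕ} (p δ : ℝ) (τ : Euc n → ℝ)
    (σ : Euc n → Matrix (Fin n) (Fin n) ℝ) (ρ : Euc n → ℝ) (J : Euc n → Euc n)
    (φp : Euc n → ℝ) : Prop :=
  ∀ φ : Euc n → ℝ, Continuous φ → (∀ x, 0 < φ x ∧ φ x ≤ φp x) →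
    ∀ W : Euc n → Euc n, ContDiff ℝ (⊤ : ℕ∞) W → SobW 2 p δ W < ⊤ → MomEq τ J φ W →
    ∀ x, HamExpr τ σ ρ φp W x ≤ 0

/-- Global subsolution property for `φ₋`. -/
def GlobalSubSol {n : ℕ} (p δ : ℝ) (τ : Euc n → ℝ)
    (σ : Euc n → Matrix (Fin n) (Fin n) ℝ) (ρ : Euc n → ℝ) (J : Euc n → Euc n)
    (φm : Euc n → ℝ) : Prop :=
  ∀ φ : Euc n → ℝ, Continuous φ → (∀ x, φm x ≤ φ x) →
    ∀ W : Euc n → Euc n, ContDiff ℝ (⊤ : ℕ∞) W → SobW 2 p δ W < ⊤ → MomEq τ J φ W →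
    ∀ x, 0 ≤ HamExpr τ σ ρ φm W x

open InnerProductSpace Laplacian

/-- The second derivative of `f` at `x` in direction `v`, read off along the line `x + t v`. -/
lemma deriv_deriv_line {n : ℕ} {f : Euc n → ℝ} {x : Euc n} (hf : ContDiffAt ℝ 2 f x) (v : Euc n) :
    deriv (deriv fun t : ℝ => f (x + t • v)) 0 = fderiv ℝ (fderiv ℝ f) x v v := by
  have hline : ∀ t : ℝ, HasDerivAt (fun t : ℝ => x + t • v) v t := fun t => by
    simpa using ((hasDerivAt_id t).smul_const v).const_add x
  have hcont : Tendsto (fun t : ℝ => x + t • v) (𝓝 0) (𝓝 x) := by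
    have := (hline 0).continuousAt.tendsto
    simpa using this
  have hd : ∀ᶠ y in 𝓝 x, DifferentiableAt ℝ f y := by
    have := hf.eventually (by simp)
    exact this.mono fun y hy => hy.differentiableAt (by norm_num)
  have h1 : (deriv fun t : ℝ => f (x + t • v)) =ᶠ[𝓝 0] fun t => fderiv ℝ f (x + t • v) v := by
    filter_upwards [hcont.eventually hd] with t ht
    exact (ht.hasFDerivAt.comp_hasDerivAt t (hline t)).deriv
  rw [h1.deriv_eq]
  have h2 : DifferentiableAt ℝ (fderiv ℝ f) (x + (0 : ℝ) • v) := by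
    simpa using (hf.fderiv_right (m := 1) (by norm_num)).differentiableAt (by norm_num)
  have h3 := h2.hasFDerivAt.comp_hasDerivAt (0 : ℝ) (hline 0)
  have h4 := (h3.clm_apply (hasDerivAt_const (0 : ℝ) v)).deriv
  simpa using h4

lemma laplacian_eq_sum_line {n : ℕ} {f : Euc n → ℝ} {x : Euc n} (hf : ContDiffAt ℝ 2 f x)
    (b : OrthonormalBasis (Fin n) ℝ (Euc n)) :
    (Δ f) x = ∑ i, deriv (deriv fun t : ℝ => f (x + t • b i)) 0 := by
  rw [laplacian_eq_iteratedFDeriv_orthonormalBasis f b]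
  simp only [iteratedFDeriv_two_apply, deriv_deriv_line hf]
  simp

lemma lap_eq_laplacian {n : ℕ} {f : Euc n → ℝ} {x : Euc n} (hf : ContDiffAt ℝ 2 f x) :
    lap f x = (Δ f) x := by
  rw [laplacian_eq_iteratedFDeriv_orthonormalBasis f (EuclideanSpace.basisFun (Fin n) ℝ)]
  simp only [iteratedFDeriv_two_apply, lap, pd]
  refine Finset.sum_congr rfl fun i _ => ?_
  have h2 : DifferentiableAt ℝ (fderiv ℝ f) x :=
    (hf.fderiv_right (m := 1) (by norm_num)).differentiableAt (by norm_num)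
  have h3 : fderiv ℝ (pd i f) x = _ := fderiv_clm_apply h2 (differentiableAt_const _)
  simp [h3]

/-- The Laplacian commutes with linear isometries. -/
lemma laplacian_comp_isometry {n : ℕ} {f : Euc n → ℝ} {x : Euc n} (σ : Euc n ≃ₗᵢ[ℝ] Euc n)
    (hf : ContDiffAt ℝ 2 f (σ x)) : (Δ fun y => f (σ y)) x = (Δ f) (σ x) := by
  have hσ : ContDiffAt ℝ 2 (fun y => f (σ y)) x :=
    hf.comp x σ.contDiff.contDiffAt
  let b := EuclideanSpace.basisFun (Fin n) ℝ
  rw [laplacian_eq_sum_line hσ b, laplacian_eq_sum_line hf (b.map σ)]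
  simp

lemma laplacian_nonpos_of_isLocalMax {n : ℕ} {u : Euc n → ℝ} {x : Euc n}
    (hu : ContDiffAt ℝ 2 u x) (hmax : IsLocalMax u x) : (Δ u) x ≤ 0 := by
  rw [laplacian_eq_sum_line hu (EuclideanSpace.basisFun (Fin n) ℝ)]
  refine Finset.sum_nonpos fun i _ => ?_
  set v := EuclideanSpace.basisFun (Fin n) ℝ i
  have hc : ContinuousAt (fun t : ℝ => x + t • v) 0 := by fun_prop
  have hx : x + (0 : ℝ) • v = x := by simp
  have hmax1 : IsLocalMax (fun t : ℝ => u (x + t • v)) 0 := by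
    have hmax0 : IsLocalMax u (x + (0 : ℝ) • v) := by rwa [hx]
    exact hc.tendsto.eventually hmax0
  by_contra! hpos
  have hc1 : ContinuousAt (fun t : ℝ => u (x + t • v)) 0 :=
    ContinuousAt.comp (g := u) (by rw [hx]; exact hu.continuousAt) hc
  -- a positive second derivative would also make `0` a local minimum, so `u` would be
  -- locally constant along the line
  have hmin1 := isLocalMin_of_deriv_deriv_pos hpos hmax1.deriv_eq_zero hc1
  have hconst : (fun t : ℝ => u (x + t • v)) =ᶠ[𝓝 0] fun _ => u (x + (0 : ℝ) • v) := by
    filter_upwards [hmax1, hmin1] with t h1 h2 using le_antisymm h1 h2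
  have := hconst.deriv.deriv_eq
  simp at this
  simp [this] at hpos

/-- Weak maximum principle for strictly subharmonic functions; `K` plays the role of the closed
domain, and the points at which the second alternative fails form its boundary. -/
lemma max_principle {n : ℕ} {K : Set (Euc n)} (hK : IsCompact K) {u : Euc n → ℝ}
    (hc : ContinuousOn u K)
    (H : ∀ x ∈ K, u x ≤ 0 ∨ (K ∈ 𝓝 x ∧ ContDiffAt ℝ 2 u x ∧ 0 < (Δ u) x)) :
    ∀ x ∈ K, u x ≤ 0 := by
  intro y hy
  obtain ⟨x, hx, hmax⟩ := hK.exists_isMaxOn ⟨y, hy⟩ hc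
  rcases H x hx with h | ⟨hn, hu, hp⟩
  · exact (hmax hy).trans h
  · have := laplacian_nonpos_of_isLocalMax hu (hmax.isLocalMax hn)
    linarith

/-- The family of barriers: a combination of the superharmonic function `|x|⁻¹` and of a
quadratic polynomial. -/
def barrier {n : ℕ} (e : Euc n) (α β γ δ κ : ℝ) (x : Euc n) : ℝ :=
  α * ‖x‖⁻¹ + β * ‖x‖ ^ 2 - γ * inner ℝ x e ^ 2 + δ * inner ℝ x e + κ

lemma contDiffAt_barrier {n : ℕ} (e : Euc n) (α β γ δ κ : ℝ) {x : Euc n} (hx : x ≠ 0) :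
    ContDiffAt ℝ 2 (barrier e α β γ δ κ) x := by
  unfold barrier
  have h1 : ContDiffAt ℝ 2 (fun x : Euc n => ‖x‖⁻¹) x :=
    (contDiffAt_norm ℝ hx).inv (norm_ne_zero_iff.2 hx)
  have h2 : ContDiffAt ℝ 2 (fun x : Euc n => ‖x‖ ^ 2) x := contDiffAt_id.norm_sq ℝ
  have h3 : ContDiffAt ℝ 2 (fun x : Euc n => inner ℝ x e) x :=
    contDiffAt_id.inner ℝ contDiffAt_const
  fun_prop

lemma laplacian_barrier {n : ℕ} (e : Euc n) (he : ‖e‖ = 1) (α β γ δ κ : ℝ) {x : Euc n}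
    (hx : x ≠ 0) :
    (Δ (barrier e α β γ δ κ)) x = α * ((3 - n) * ‖x‖⁻¹ ^ 3) + 2 * n * β - 2 * γ := by
  rw [laplacian_eq_sum_line (contDiffAt_barrier e α β γ δ κ hx) (EuclideanSpace.basisFun (Fin n) ℝ)]
  have hr : 0 < ‖x‖ := norm_pos_iff.2 hx
  have key : ∀ i : Fin n, deriv (deriv fun t : ℝ =>
      barrier e α β γ δ κ (x + t • EuclideanSpace.basisFun (Fin n) ℝ i)) 0
      = α * (3 * (x i) ^ 2 * ‖x‖⁻¹ ^ 5 - ‖x‖⁻¹ ^ 3) + 2 * β - 2 * γ * (e i) ^ 2 := by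
    intro i
    set q : ℝ → ℝ := fun t => ‖x‖ ^ 2 + 2 * x i * t + t ^ 2 with hq
    have hnorm : ∀ t : ℝ, ‖x + t • EuclideanSpace.basisFun (Fin n) ℝ i‖ ^ 2 = q t := by
      intro t
      rw [norm_add_sq_real, inner_smul_right, norm_smul, mul_pow]
      simp [hq, EuclideanSpace.inner_single_right]
      ring
    have hfun : (fun t : ℝ => barrier e α β γ δ κ (x + t • EuclideanSpace.basisFun (Fin n) ℝ i))
        = fun t => α * (√(q t))⁻¹ + β * q t - γ * (inner ℝ x e + t * e i) ^ 2
          + δ * (inner ℝ x e + t * e i) + κ := by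
      funext t
      have hin : inner ℝ (x + t • EuclideanSpace.basisFun (Fin n) ℝ i) e
          = inner ℝ x e + t * e i := by
        rw [inner_add_left, inner_smul_left]
        simp [EuclideanSpace.inner_single_left]
      rw [barrier, hin, hnorm, ← hnorm, Real.sqrt_sq (norm_nonneg _)]
    rw [hfun]
    have hq' : ∀ t, HasDerivAt q (2 * x i + 2 * t) t := fun t => by
      have := (((hasDerivAt_id t).const_mul (2 * x i)).const_add (‖x‖ ^ 2)).add
        ((hasDerivAt_id t).pow 2)
      convert! this using 1
      simp
    have hq0 : q 0 = ‖x‖ ^ 2 := by simp [hq]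
    have hs0 : √(q 0) = ‖x‖ := by rw [hq0, Real.sqrt_sq hr.le]
    have hpos : ∀ᶠ t in 𝓝 (0 : ℝ), 0 < q t :=
      (hq' 0).continuousAt.eventually_const_lt (by rw [hq0]; positivity)
    have hs : ∀ t, 0 < q t → HasDerivAt (fun t => (√(q t))⁻¹)
        (-((x i + t) * (√(q t))⁻¹ ^ 3)) t := by
      intro t ht
      have h0 : 0 < √(q t) := Real.sqrt_pos.2 ht
      convert! ((hq' t).sqrt ht.ne').inv h0.ne' using 1
      field_simp
    have hl : ∀ t, HasDerivAt (fun t => inner ℝ x e + t * e i) (e i) t := fun t => by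
      simpa using ((hasDerivAt_id t).mul_const (e i)).const_add (inner ℝ x e)
    have h1 : (deriv fun t => α * (√(q t))⁻¹ + β * q t - γ * (inner ℝ x e + t * e i) ^ 2
          + δ * (inner ℝ x e + t * e i) + κ) =ᶠ[𝓝 0]
        fun t => α * (-((x i + t) * (√(q t))⁻¹ ^ 3)) + β * (2 * x i + 2 * t)
          - γ * (2 * (inner ℝ x e + t * e i) * e i) + δ * e i := by
      filter_upwards [hpos] with t ht
      have := (((((hs t ht).const_mul α).add ((hq' t).const_mul β)).sub
        (((hl t).pow 2).const_mul γ)).add ((hl t).const_mul δ)).add_const κ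
      convert! this.deriv using 1
      simp
    rw [h1.deriv_eq]
    have hid : ∀ c : ℝ, HasDerivAt (fun t : ℝ => c + t) 1 0 := fun c =>
      (hasDerivAt_id (0 : ℝ)).const_add c
    have h2 := ((((((hid (x i)).mul ((hs 0 (by rw [hq0]; positivity)).pow 3)).neg).const_mul α).add
      ((((hasDerivAt_id (0 : ℝ)).const_mul 2).const_add (2 * x i)).const_mul β)).sub
      ((((hl 0).const_mul 2).mul_const (e i)).const_mul γ)).add_const (δ * e i)
    refine (HasDerivAt.deriv (by convert! h2 using 1)).trans ?_
    simp [hs0]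
    ring
  rw [Finset.sum_congr rfl fun i _ => key i]
  have hx2 : ∑ i, (x i) ^ 2 = ‖x‖ ^ 2 := (EuclideanSpace.real_norm_sq_eq x).symm
  have he2 : ∑ i, (e i) ^ 2 = 1 := by rw [← EuclideanSpace.real_norm_sq_eq e, he]; norm_num
  have hsplit : ∀ i : Fin n, α * (3 * (x i) ^ 2 * ‖x‖⁻¹ ^ 5 - ‖x‖⁻¹ ^ 3) + 2 * β - 2 * γ * (e i) ^ 2
      = (3 * α * ‖x‖⁻¹ ^ 5) * (x i) ^ 2 + (2 * β - α * ‖x‖⁻¹ ^ 3) - 2 * γ * (e i) ^ 2 := by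
    intro i; ring
  simp only [hsplit, Finset.sum_sub_distrib, Finset.sum_add_distrib, ← Finset.mul_sum, hx2, he2]
  simp
  field_simp
  ring

/-- Values of `h` at two points of a common sphere differ by `O(1/|x|)`: with `σ` the reflection
exchanging the two points, `h - h ∘ σ` vanishes on the mirror and is compared, on the half of
`R₀ ≤ |x| ≤ ρ` in front of the mirror, with `2MR₀/|x|` plus a quadratic barrier that
disappears as `ρ → ∞`. -/
lemma sphere_osc {n : ℕ} (hn : 3 ≤ n) {R R₀ M : ℝ} (hR : 0 < R) (hR₀ : R < R₀) (hM : 0 < M)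
    {h : Euc n → ℝ} (hb : ∀ x, |h x| ≤ M)
    (hreg : ∀ x : Euc n, R < ‖x‖ → ContDiffAt ℝ 2 h x)
    (hharm : ∀ x : Euc n, R < ‖x‖ → (Δ h) x = 0) {x y : Euc n} (hxy : ‖x‖ = ‖y‖)
    (hx : R₀ ≤ ‖x‖) : h x - h y ≤ 2 * M * R₀ * ‖x‖⁻¹ := by
  have hR₀pos : 0 < R₀ := hR.trans hR₀
  have hxpos : 0 < ‖x‖ := hR₀pos.trans_le hx
  rcases eq_or_ne x y with rfl | hne
  · rw [sub_self]; positivity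
  have hd : 0 < ‖x - y‖ := norm_pos_iff.2 (sub_ne_zero.2 hne)
  set e : Euc n := ‖x - y‖⁻¹ • (x - y) with he_def
  have he : ‖e‖ = 1 := by
    rw [he_def, norm_smul, norm_inv, norm_norm, inv_mul_cancel₀ hd.ne']
  set σ : Euc n ≃ₗᵢ[ℝ] Euc n := (ℝ ∙ e)ᗮ.reflection with hσ_def
  have hspan : (ℝ ∙ e) = (ℝ ∙ (x - y)) :=
    Submodule.span_singleton_smul_eq (IsUnit.mk0 _ (inv_ne_zero hd.ne')) (x - y)
  have hσx : σ x = y := by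
    have key : ∀ (W : Submodule ℝ (Euc n)), W = (ℝ ∙ (x - y)) → Wᗮ.reflection x = y := by
      rintro W rfl
      exact Submodule.reflection_sub hxy
    exact key _ hspan
  have hσfix : ∀ z : Euc n, inner ℝ z e = 0 → σ z = z := fun z hz =>
    Submodule.reflection_mem_subspace_eq_self
      (Submodule.mem_orthogonal_singleton_iff_inner_left.2 hz)
  have hxe : 0 ≤ inner ℝ x e := by
    rw [he_def, inner_smul_right, inner_sub_right, real_inner_self_eq_norm_sq]
    have h1 := real_inner_le_norm x y
    rw [← hxy] at h1
    have : 0 ≤ ‖x‖ ^ 2 - inner ℝ x y := by nlinarith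
    positivity
  have hlin : Continuous fun z : Euc n => (inner ℝ z e : ℝ) := continuous_id.inner continuous_const
  -- the comparison on the half annulus of outer radius `ρ`
  have main : ∀ ρ : ℝ, ‖x‖ < ρ → h x - h y ≤ 2 * M * R₀ * ‖x‖⁻¹
      + (2 * M * (‖x‖ * ρ⁻¹) ^ 2 + 2 * M * (n + 1) * inner ℝ x e * ρ⁻¹) := by
    intro ρ hρ
    have hρpos : 0 < ρ := hxpos.trans hρ
    set K : Set (Euc n) := {z | R₀ ≤ ‖z‖ ∧ ‖z‖ ≤ ρ ∧ 0 ≤ inner ℝ z e} with hK_def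
    have hKc : IsCompact K := by
      refine (isCompact_closedBall (0 : Euc n) ρ).of_isClosed_subset ?_ ?_
      · exact (isClosed_le continuous_const continuous_norm).inter
          ((isClosed_le continuous_norm continuous_const).inter
            (isClosed_le continuous_const hlin))
      · rintro z ⟨_, hz, _⟩
        simpa using hz
    set B : Euc n → ℝ := barrier e (2 * M * R₀) (2 * M * ρ⁻¹ ^ 2)
      (2 * M * (n + 1) * ρ⁻¹ ^ 2) (2 * M * (n + 1) * ρ⁻¹) 0 with hB
    have hBeq : ∀ z, B z = 2 * M * (R₀ * ‖z‖⁻¹) + 2 * M * (‖z‖ * ρ⁻¹) ^ 2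
        + 2 * M * (n + 1) * ((inner ℝ z e * ρ⁻¹) * (1 - inner ℝ z e * ρ⁻¹)) := by
      intro z
      simp only [hB, barrier]
      ring
    have hone : ∀ z ∈ K, 0 ≤ (inner ℝ z e * ρ⁻¹) * (1 - inner ℝ z e * ρ⁻¹) := by
      rintro z ⟨_, hz, hze⟩
      have h1 := real_inner_le_norm z e
      rw [he, mul_one] at h1
      have h2 : inner ℝ z e * ρ⁻¹ ≤ 1 := by
        rw [← div_eq_mul_inv, div_le_one hρpos]; linarith
      exact mul_nonneg (by positivity) (by linarith)
    have hg2 : ∀ z, h z - h (σ z) ≤ 2 * M := fun z => by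
      have h1 := abs_le.1 (hb z)
      have h2 := abs_le.1 (hb (σ z))
      linarith
    have hreg' : ∀ z : Euc n, R < ‖z‖ → ContDiffAt ℝ 2 (fun z => h (σ z)) z := fun z hz =>
      ContDiffAt.comp (g := h) z (hreg _ (by rwa [σ.norm_map])) σ.contDiff.contDiffAt
    have hureg : ∀ z : Euc n, R < ‖z‖ → ContDiffAt ℝ 2 ((h - fun z => h (σ z)) - B) z :=
      fun z hz => ((hreg z hz).sub (hreg' z hz)).sub
        (contDiffAt_barrier _ _ _ _ _ _ (norm_pos_iff.1 (hR.trans hz)))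
    have hmp := max_principle hKc (u := (h - fun z => h (σ z)) - B)
      (fun z hz => (hureg z (hR₀.trans_le hz.1)).continuousAt.continuousWithinAt) (by
      intro z hz
      obtain ⟨hz1, hz2, hz3⟩ := hz
      have hzR : R < ‖z‖ := hR₀.trans_le hz1
      have hzpos : 0 < ‖z‖ := hR.trans hzR
      have hB1 := hone z ⟨hz1, hz2, hz3⟩
      have hB2 : 0 ≤ 2 * M * (n + 1) * ((inner ℝ z e * ρ⁻¹) * (1 - inner ℝ z e * ρ⁻¹)) := by
        positivity
      have hB3 : 0 ≤ 2 * M * (R₀ * ‖z‖⁻¹) := by positivity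
      have hB4 : 0 ≤ 2 * M * (‖z‖ * ρ⁻¹) ^ 2 := by positivity
      simp only [Pi.sub_apply]
      rcases hz1.eq_or_lt with h1 | h1
      · left
        have : R₀ * ‖z‖⁻¹ = 1 := by rw [h1]; exact mul_inv_cancel₀ hzpos.ne'
        rw [hBeq, this]
        linarith [hg2 z]
      rcases hz2.eq_or_lt with h2 | h2
      · left
        have : ‖z‖ * ρ⁻¹ = 1 := by rw [h2]; exact mul_inv_cancel₀ hρpos.ne'
        rw [this] at hB4
        rw [hBeq, this]
        linarith [hg2 z]
      rcases hz3.eq_or_lt with h3 | h3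
      · left
        rw [hσfix z h3.symm, hBeq]
        linarith
      right
      refine ⟨?_, hureg z hzR, ?_⟩
      · have o1 : ∀ᶠ w in 𝓝 z, R₀ < ‖w‖ := continuous_norm.continuousAt.eventually_const_lt h1
        have o2 : ∀ᶠ w in 𝓝 z, ‖w‖ < ρ := continuous_norm.continuousAt.eventually_lt_const h2
        have o3 : ∀ᶠ w : Euc n in 𝓝 z, 0 < inner ℝ w e :=
          hlin.continuousAt.eventually_const_lt h3
        filter_upwards [o1, o2, o3] with w w1 w2 w3 using ⟨w1.le, w2.le, w3.le⟩
      · have hsub : ContDiffAt ℝ 2 (h - fun z => h (σ z)) z := (hreg z hzR).sub (hreg' z hzR)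
        rw [hsub.laplacian_sub (contDiffAt_barrier _ _ _ _ _ _ (norm_pos_iff.1 hzpos)),
          (hreg z hzR).laplacian_sub (hreg' z hzR),
          laplacian_comp_isometry σ (hreg _ (by rwa [σ.norm_map])), hharm z hzR,
          hharm (σ z) (by rwa [σ.norm_map]),
          laplacian_barrier e he _ _ _ _ _ (norm_pos_iff.1 hzpos)]
        have hn3 : (3 : ℝ) ≤ n := by exact_mod_cast hn
        have p1 : 0 ≤ 2 * M * R₀ * ((n - 3) * ‖z‖⁻¹ ^ 3) := by
          have : (0 : ℝ) ≤ n - 3 := by linarith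
          positivity
        have p2 : 0 < 4 * M * ρ⁻¹ ^ 2 := by positivity
        linarith)
    have hfin := hmp x ⟨hx, hρ.le, hxe⟩
    simp only [Pi.sub_apply, hσx, hBeq] at hfin
    have p3 : 0 ≤ 2 * M * (n + 1) * (inner ℝ x e * ρ⁻¹) ^ 2 := by positivity
    linarith
  have hlim : Tendsto (fun ρ : ℝ => 2 * M * R₀ * ‖x‖⁻¹
      + (2 * M * (‖x‖ * ρ⁻¹) ^ 2 + 2 * M * (n + 1) * inner ℝ x e * ρ⁻¹)) atTop
      (𝓝 (2 * M * R₀ * ‖x‖⁻¹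
        + (2 * M * (‖x‖ * 0) ^ 2 + 2 * M * (n + 1) * inner ℝ x e * 0))) := by
    have := tendsto_inv_atTop_zero (𝕜 := ℝ)
    exact (((this.const_mul _).pow 2).const_mul _ |>.add (this.const_mul _)).const_add _
  have := ge_of_tendsto hlim ((eventually_gt_atTop ‖x‖).mono main)
  simpa using this

/-- Maximum principle for harmonic functions on spherical shells. -/
lemma shell_max {n : ℕ} (hn : 0 < n) {R a b c : ℝ} (hR : 0 < R) (ha : R < a) {h : Euc n → ℝ}
    (hreg : ∀ x : Euc n, R < ‖x‖ → ContDiffAt ℝ 2 h x)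
    (hharm : ∀ x : Euc n, R < ‖x‖ → (Δ h) x = 0)
    (h1 : ∀ x : Euc n, ‖x‖ = a → h x ≤ c) (h2 : ∀ x : Euc n, ‖x‖ = b → h x ≤ c)
    {y : Euc n} (hy1 : a ≤ ‖y‖) (hy2 : ‖y‖ ≤ b) : h y ≤ c := by
  let e : Euc n := EuclideanSpace.single ⟨0, hn⟩ 1
  have he : ‖e‖ = 1 := by simp [e]
  -- subtracting `c + η (b² - |x|²)` makes `h` strictly subharmonic
  have main : ∀ η : ℝ, 0 < η → h y ≤ c + η * (b ^ 2 - ‖y‖ ^ 2) := by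
    intro η hη
    set B : Euc n → ℝ := barrier e 0 (-η) 0 0 (c + η * b ^ 2) with hB
    have hBeq : ∀ z, B z = c + η * (b ^ 2 - ‖z‖ ^ 2) := fun z => by
      simp only [hB, barrier]
      ring
    have hureg : ∀ z : Euc n, R < ‖z‖ → ContDiffAt ℝ 2 (h - B) z := fun z hz =>
      (hreg z hz).sub (contDiffAt_barrier _ _ _ _ _ _ (norm_pos_iff.1 (hR.trans hz)))
    have hKc : IsCompact {z : Euc n | a ≤ ‖z‖ ∧ ‖z‖ ≤ b} := by
      refine (isCompact_closedBall (0 : Euc n) b).of_isClosed_subset ?_ ?_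
      · exact (isClosed_le continuous_const continuous_norm).inter
          (isClosed_le continuous_norm continuous_const)
      · rintro z ⟨_, hz⟩
        simpa using hz
    have hmp := max_principle hKc (u := h - B)
      (fun z hz => (hureg z (ha.trans_le hz.1)).continuousAt.continuousWithinAt) (by
      rintro z ⟨hz1, hz2⟩
      have hzR : R < ‖z‖ := ha.trans_le hz1
      have hzpos : 0 < ‖z‖ := hR.trans hzR
      have hq : 0 ≤ η * (b ^ 2 - ‖z‖ ^ 2) := mul_nonneg hη.le (by nlinarith)
      simp only [Pi.sub_apply, hBeq]
      rcases hz1.eq_or_lt with e1 | e1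
      · left; linarith [h1 z e1.symm]
      rcases hz2.eq_or_lt with e2 | e2
      · left; linarith [h2 z e2]
      right
      refine ⟨?_, hureg z hzR, ?_⟩
      · have o1 : ∀ᶠ w in 𝓝 z, a < ‖w‖ := continuous_norm.continuousAt.eventually_const_lt e1
        have o2 : ∀ᶠ w in 𝓝 z, ‖w‖ < b := continuous_norm.continuousAt.eventually_lt_const e2
        filter_upwards [o1, o2] with w w1 w2 using ⟨w1.le, w2.le⟩
      · rw [(hreg z hzR).laplacian_sub
          (contDiffAt_barrier _ _ _ _ _ _ (norm_pos_iff.1 hzpos)), hharm z hzR,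
          laplacian_barrier e he _ _ _ _ _ (norm_pos_iff.1 hzpos)]
        have hn' : (0 : ℝ) < n := by exact_mod_cast hn
        have : 0 < 2 * n * η := by positivity
        linarith)
    have := hmp y ⟨hy1, hy2⟩
    simp only [Pi.sub_apply, hBeq] at this
    linarith
  have hlim : Tendsto (fun η : ℝ => c + η * (b ^ 2 - ‖y‖ ^ 2)) (𝓝[>] 0)
      (𝓝 (c + 0 * (b ^ 2 - ‖y‖ ^ 2))) :=
    ((continuous_const.add (continuous_id.mul continuous_const)).tendsto 0).mono_left
      nhdsWithin_le_nhds
  have := ge_of_tendsto hlim (eventually_nhdsWithin_of_forall main)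
  simpa using this

/-- **Bounded harmonic functions on a Euclidean end tend to a constant.** -/
theorem bounded_harmonic_tends_to_constant (n : ℕ) (hn : 3 ≤ n) (R : ℝ) (hR : 0 < R)
    (h : Euc n → ℝ) (hb : ∃ M, ∀ x, |h x| ≤ M)
    (hreg : ContDiffOn ℝ 2 h {x : Euc n | R < ‖x‖})
    (hharm : ∀ x : Euc n, R < ‖x‖ → lap h x = 0) :
    ∃ A : ℝ, Tendsto h (cocompact (Euc n)) (𝓝 A) := by
  obtain ⟨M', hM'⟩ := hb
  obtain ⟨M, hM, hb⟩ : ∃ M, 0 < M ∧ ∀ x, |h x| ≤ M :=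
    ⟨|M'| + 1, by positivity, fun x => by linarith [hM' x, le_abs_self M']⟩
  have hopen : IsOpen {x : Euc n | R < ‖x‖} := isOpen_lt continuous_const continuous_norm
  have hreg' : ∀ x : Euc n, R < ‖x‖ → ContDiffAt ℝ 2 h x := fun x hx =>
    hreg.contDiffAt (hopen.mem_nhds hx)
  have hharm' : ∀ x : Euc n, R < ‖x‖ → (Δ h) x = 0 := fun x hx => by
    rw [← lap_eq_laplacian (hreg' x hx), hharm x hx]
  have : Nonempty (Fin n) := ⟨⟨0, by omega⟩⟩
  have hbelow : IsBoundedUnder (· ≥ ·) (cocompact (Euc n)) h :=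
    isBoundedUnder_of ⟨-M, fun x => (abs_le.1 (hb x)).1⟩
  have habove : IsBoundedUnder (· ≤ ·) (cocompact (Euc n)) h :=
    isBoundedUnder_of ⟨M, fun x => (abs_le.1 (hb x)).2⟩
  set A := liminf h (cocompact (Euc n)) with hA
  refine ⟨A, Metric.tendsto_nhds.2 fun ε hε => ?_⟩
  have hlow : ∀ᶠ x in cocompact (Euc n), A - ε < h x :=
    eventually_lt_of_lt_liminf (by linarith) hbelow
  have hfreq : ∃ᶠ x in cocompact (Euc n), h x < A + ε / 4 :=
    frequently_lt_of_liminf_lt habove.isCoboundedUnder_ge (by linarith)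
  have hnorm : Tendsto (fun x : Euc n => ‖x‖) (cocompact (Euc n)) atTop :=
    tendsto_norm_cocompact_atTop
  have hosc : ∀ᶠ r : ℝ in atTop, 2 * M * (R + 1) * r⁻¹ < ε / 4 := by
    have := (tendsto_inv_atTop_zero (𝕜 := ℝ)).const_mul (2 * M * (R + 1))
    rw [mul_zero] at this
    exact this.eventually_lt_const (by positivity)
  -- a sphere carrying one value below `A + ε/4` lies entirely below `A + ε/2`
  have hsphere : ∀ x : Euc n, R + 1 ≤ ‖x‖ → 2 * M * (R + 1) * ‖x‖⁻¹ < ε / 4 → h x < A + ε / 4 →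
      ∀ z : Euc n, ‖z‖ = ‖x‖ → h z ≤ A + ε / 2 := by
    intro x hx1 hx2 hx3 z hz
    have := sphere_osc hn hR (lt_add_one R) hM hb hreg' hharm' hz (by rwa [hz])
    rw [hz] at this
    linarith
  have hgood := hnorm.eventually (hosc.and (eventually_ge_atTop (R + 1)))
  obtain ⟨x₁, hx1, hx1o, hx1R⟩ := (hfreq.and_eventually hgood).exists
  filter_upwards [hlow, hnorm.eventually (eventually_ge_atTop ‖x₁‖)] with y hy1 hy2
  obtain ⟨x₂, hx2, ⟨hx2o, hx2R⟩, hx2y⟩ := (hfreq.and_eventually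
    (hgood.and (hnorm.eventually (eventually_ge_atTop ‖y‖)))).exists
  have hup : h y ≤ A + ε / 2 :=
    shell_max (by omega) hR (by linarith) hreg' hharm' (hsphere x₁ hx1R hx1o hx1)
      (hsphere x₂ hx2R hx2o hx2) hy2 hx2y
  rw [Real.dist_eq, abs_lt]
  constructor <;> linarith
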